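/- Let H be an infinite-dimensional separable complex Hilbert space and W a symmetric countably syndetic subset of U(H). Let K be a balanced closed subspace of H such that G_K ⊆ W^24 and W^120 contains an open (in the strong operator topology relative to I_K) neighborhood of the identity in the setwise stabilizer I_K. Then for every infinite-dimensional closed subspace L ⊆ H there exist v ∈ W^64 and a closed subspace L' ⊆ L such that v(L') = K^⊥. -/

import Mathlib

open Pointwise Topology

/-- The strong operator topology on the group of invertible linear isometries of `H`:
the topology of pointwise convergence on `H`. -/
noncomputable def strongOperatorTopology (𝕜 H : Type*) [RCLike 𝕜] [NormedAddCommGroup H]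
    [InnerProductSpace 𝕜 H] : TopologicalSpace (H ≃ₗᵢ[𝕜] H) :=
  TopologicalSpace.induced (fun u => (u : H → H)) Pi.topologicalSpace

/-- The pointwise stabilizer of a subspace `K` in the unitary group of `H`. -/
def pointwiseStabilizer {𝕜 H : Type*} [RCLike 𝕜] [NormedAddCommGroup H]
    [InnerProductSpace 𝕜 H] (K : Submodule 𝕜 H) : Set (H ≃ₗᵢ[𝕜] H) :=
  {u | ∀ x ∈ K, u x = x}

/-- The setwise stabilizer of a subspace `K` in the unitary group of `H`. -/
def setwiseStabilizer {𝕜 H : Type*} [RCLike 𝕜] [NormedAddCommGroup H]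
    [InnerProductSpace 𝕜 H] (K : Submodule 𝕜 H) : Set (H ≃ₗᵢ[𝕜] H) :=
  {u | K.map (u.toLinearEquiv : H →ₗ[𝕜] H) = K}

/-!
Write `M = Kᗮ`. If `e` and `f` are mutually orthogonal orthonormal sequences and `A` is a set of
indices, let `g_A` exchange `e i` with `f i` for `i ∈ A`. There are uncountably many sets `A`, so
two distinct ones have `g_A` and `g_B` in the same translate of `W`, and `g_A⁻¹ g_B ∈ W ^ 2`
exchanges `e` and `f` along `A ∆ B`; a suitable choice of the sets `A` makes `A ∆ B` infinite and
co-infinite.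

Fix a Hilbert basis `b` of `M` and such an operator `g` exchanging `b i`, for `i` in some `D`, with
vectors of `K`. Conjugating by `g` an element of `G_K` that squeezes `{b i | i ∉ D}` into a smaller
part of itself yields an operator that keeps `{b i | i ∈ D}` in place, so that `M` goes onto a
subspace of infinite codimension in `M`. By a second element of `G_K` this subspace can be moved
onto any infinite-dimensional coordinate subspace of `M` of infinite codimension, in particular
onto one that some element of `W ^ 2` carries into `L`.
-/

open Function Set
open scoped InnerProductSpace symmDiff

section Moiety

variable {α β : Type*}

/-- A moiety of a type: a set that is infinite and has infinite complement. -/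
def IsMoiety (X : Set α) : Prop :=
  X.Infinite ∧ Xᶜ.Infinite

theorem IsMoiety.compl {X : Set α} (hX : IsMoiety X) : IsMoiety Xᶜ :=
  ⟨hX.2, by simpa only [compl_compl] using hX.1⟩

theorem IsMoiety.image {X : Set α} (hX : IsMoiety X) {k : α → β} (hk : Injective k) :
    IsMoiety (k '' X) :=
  ⟨hX.1.image hk.injOn, (hX.2.image hk.injOn).mono (image_compl_subset hk)⟩

theorem IsMoiety.exists_perm_mapsTo [Countable α] {X Y : Set α} (hX : IsMoiety X)
    (hY : IsMoiety Y) : ∃ π : Equiv.Perm α, MapsTo π X Y := by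
  classical
  have := hX.1.to_subtype
  have := hX.2.to_subtype
  have := hY.1.to_subtype
  have := hY.2.to_subtype
  obtain ⟨a⟩ := nonempty_equiv_of_countable (α := X) (β := Y)
  obtain ⟨c⟩ := nonempty_equiv_of_countable (α := ↥Xᶜ) (β := ↥Yᶜ)
  obtain ⟨π, hπ⟩ := (Equiv.Set.compl a).symm c
  exact ⟨π, fun i hi => hπ ⟨i, hi⟩ ▸ (a ⟨i, hi⟩).2⟩

theorem exists_subset_infinite_infinite_diff {X : Set α} (hX : X.Infinite) :
    ∃ Y ⊆ X, Y.Infinite ∧ (X \ Y).Infinite := by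
  obtain ⟨Y, Z, rfl, hYZ, hcard⟩ := hX.exists_union_disjoint_cardinal_eq_of_infinite
  have hfin : Y.Finite ↔ Z.Finite := by
    rw [← Cardinal.lt_aleph0_iff_set_finite, hcard, Cardinal.lt_aleph0_iff_set_finite]
  have hY : Y.Infinite := fun h => hX (h.union (hfin.1 h))
  refine ⟨Y, subset_union_left, hY, ?_⟩
  rw [union_sdiff_cancel_left hYZ.le_bot]
  exact fun h => hY (hfin.2 h)

theorem exists_pairwise_isMoiety_symmDiff :
    ∃ A : Set ℕ → Set ℕ, Pairwise fun S T => IsMoiety (A S ∆ A T) := by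
  have hrow (m : ℕ) : {n : ℕ | n.unpair.1 = m}.Infinite :=
    (infinite_range_of_injective fun a b h => (Nat.pair_eq_pair.1 h).2).mono
      (range_subset_iff.2 fun a => by simp : range (Nat.pair m) ⊆ _)
  -- row `0` is reserved for the complement of the symmetric differences
  refine ⟨fun S => {n | ∃ m ∈ S, n.unpair.1 = m + 1}, fun S T hST => ⟨?_, ?_⟩⟩
  · obtain ⟨m, hm⟩ := symmDiff_nonempty.2 hST
    refine (hrow (m + 1)).mono fun n hn => ?_
    have hn : n.unpair.1 = m + 1 := hn
    simpa [mem_symmDiff, hn] using hm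
  · refine (hrow 0).mono fun n hn => ?_
    have hn : n.unpair.1 = 0 := hn
    simp [hn]

end Moiety

section Syndetic

variable {G : Type*} [Group G] {W : Set G}

/-- A subset of a group is countably syndetic if countably many of its left translates cover the
group. The translates are indexed by `ℕ`, possibly with repetitions. -/
def IsCountablySyndetic (W : Set G) : Prop :=
  ∃ s : ℕ → G, ∀ g, ∃ n, g ∈ s n • W

theorem IsCountablySyndetic.nonempty (hW : IsCountablySyndetic W) : W.Nonempty := by
  obtain ⟨s, hs⟩ := hW
  obtain ⟨n, hn⟩ := hs 1
  exact smul_set_nonempty.1 ⟨1, hn⟩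

theorem IsCountablySyndetic.exists_ne_inv_mul_mem (hW : IsCountablySyndetic W) {α : Type*}
    [Uncountable α] (g : α → G) : ∃ a b, a ≠ b ∧ (g a)⁻¹ * g b ∈ W⁻¹ * W := by
  obtain ⟨s, hs⟩ := hW
  choose n hn using fun a => hs (g a)
  obtain ⟨a, b, hab, hne⟩ := not_injective_iff.1 (not_injective_uncountable_countable n)
  refine ⟨a, b, hne, mem_mul.2 ⟨((s (n a))⁻¹ * g a)⁻¹, ?_, (s (n b))⁻¹ * g b, ?_, ?_⟩⟩
  · exact inv_mem_inv.2 (mem_smul_set_iff_inv_smul_mem.1 (hn a))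
  · exact mem_smul_set_iff_inv_smul_mem.1 (hn b)
  · rw [hab]
    group

theorem inv_mem_pow_of_inv_eq (hsym : W⁻¹ = W) {n : ℕ} {g : G} (hg : g ∈ W ^ n) :
    g⁻¹ ∈ W ^ n := by
  rw [← hsym, inv_pow]
  exact inv_mem_inv.2 hg

theorem pow_two_mul_subset_pow_two_mul (hsym : W⁻¹ = W) (hne : W.Nonempty) {m n : ℕ}
    (hmn : m ≤ n) : W ^ (2 * m) ⊆ W ^ (2 * n) := by
  have hone : (1 : G) ∈ W ^ 2 := by
    obtain ⟨a, ha⟩ := hne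
    rw [pow_two, ← inv_mul_cancel a]
    exact mul_mem_mul (hsym ▸ inv_mem_inv.2 ha) ha
  rw [pow_mul, pow_mul]
  exact pow_subset_pow_right hone hmn

end Syndetic

section Orthonormal

variable {𝕜 H : Type*} [RCLike 𝕜] [NormedAddCommGroup H] [InnerProductSpace 𝕜 H]

theorem exists_mem_orthogonal_norm_eq_one {V : Submodule 𝕜 H} (hV : ¬ FiniteDimensional 𝕜 V)
    (F : Submodule 𝕜 H) [FiniteDimensional 𝕜 F] : ∃ x ∈ V, x ∈ Fᗮ ∧ ‖x‖ = 1 := by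
  let φ : V →ₗ[𝕜] F := (F.orthogonalProjectionOnto : H →ₗ[𝕜] F).comp V.subtype
  have hφ : ¬ Injective φ := fun h => hV (FiniteDimensional.of_injective φ h)
  obtain ⟨x, hφx, hx⟩ : ∃ x, φ x = 0 ∧ x ≠ 0 := by
    simpa [injective_iff_map_eq_zero] using hφ
  have hxF : (x : H) ∈ Fᗮ := F.orthogonalProjectionOnto_eq_zero_iff.1 hφx
  exact ⟨_, V.smul_mem _ x.2, Fᗮ.smul_mem _ hxF,
    norm_smul_inv_norm (𝕜 := 𝕜) (Submodule.coe_eq_zero.not.2 hx)⟩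

theorem exists_orthonormal_forall_mem {V : ℕ → Submodule 𝕜 H}
    (hV : ∀ n, ¬ FiniteDimensional 𝕜 (V n)) : ∃ e : ℕ → H, Orthonormal 𝕜 e ∧ ∀ n, e n ∈ V n := by
  classical
  choose x hxV hx hx1 using fun n (s : Finset H) =>
    exists_mem_orthogonal_norm_eq_one (hV n) (Submodule.span 𝕜 s)
  let s (n : ℕ) : Finset H := Nat.rec ∅ (fun m t => insert (x m t) t) n
  have hs : Monotone s := monotone_nat_of_le_succ fun n => Finset.subset_insert _ _
  have hlt {m n : ℕ} (hmn : m < n) : ⟪x m (s m), x n (s n)⟫_𝕜 = 0 :=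
    (Submodule.mem_orthogonal _ _).1 (hx n (s n)) _ <|
      Submodule.subset_span (hs hmn (Finset.mem_insert_self _ _))
  refine ⟨fun n => x n (s n), ⟨fun n => hx1 _ _, fun m n hmn => ?_⟩, fun n => hxV _ _⟩
  rcases hmn.lt_or_gt with h | h
  · exact hlt h
  · exact inner_eq_zero_symm.1 (hlt h)

theorem exists_orthonormal_pair {V V' : Submodule 𝕜 H} (hV : ¬ FiniteDimensional 𝕜 V)
    (hV' : ¬ FiniteDimensional 𝕜 V') :
    ∃ e f : ℕ → H, Orthonormal 𝕜 e ∧ Orthonormal 𝕜 f ∧ (∀ i j, ⟪e i, f j⟫_𝕜 = 0) ∧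
      (∀ n, e n ∈ V) ∧ ∀ n, f n ∈ V' := by
  let σ := Equiv.natSumNatEquivNat
  let U : ℕ ⊕ ℕ → Submodule 𝕜 H := Sum.elim (fun _ => V) (fun _ => V')
  have hU : ∀ i, ¬ FiniteDimensional 𝕜 (U i) := Sum.forall.2 ⟨fun _ => hV, fun _ => hV'⟩
  obtain ⟨d, hd, hdU⟩ := exists_orthonormal_forall_mem (V := U ∘ σ.symm) fun n => hU _
  have hmem (i : ℕ ⊕ ℕ) : d (σ i) ∈ U i := by simpa using hdU (σ i)
  exact ⟨d ∘ σ ∘ Sum.inl, d ∘ σ ∘ Sum.inr, hd.comp _ (σ.injective.comp Sum.inl_injective),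
    hd.comp _ (σ.injective.comp Sum.inr_injective), fun i j => hd.2 (σ.injective.ne Sum.inl_ne_inr),
    fun n => hmem (.inl n), fun n => hmem (.inr n)⟩

theorem countable_of_orthonormal [TopologicalSpace.SeparableSpace H] {ι : Type*} {v : ι → H}
    (hv : Orthonormal 𝕜 v) : Countable ι := by
  refine Pairwise.countable_of_isOpen_disjoint (s := fun i => Metric.ball (v i) (1 / 2))
    (fun i j hij => Metric.ball_disjoint_ball ?_) (fun i => Metric.isOpen_ball)
    (fun i => Metric.nonempty_ball.2 one_half_pos)
  have hsq : ‖v i - v j‖ ^ 2 = 2 := by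
    rw [norm_sub_sq (𝕜 := 𝕜), hv.1, hv.1, hv.2 hij]
    norm_num
  rw [dist_eq_norm]
  nlinarith [norm_nonneg (v i - v j)]

end Orthonormal

section HilbertBasis

variable {𝕜 E : Type*} [RCLike 𝕜] [NormedAddCommGroup E] [InnerProductSpace 𝕜 E]

theorem exists_hilbertBasis_coe_eq_comp [CompleteSpace E] {ι ι' : Type*} (b : HilbertBasis ι 𝕜 E)
    (σ : ι' ≃ ι) : ∃ c : HilbertBasis ι' 𝕜 E, ⇑c = b ∘ σ :=
  ⟨HilbertBasis.mk (b.orthonormal.comp σ σ.injective)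
    (by rw [σ.surjective.range_comp, b.dense_span]), HilbertBasis.coe_mk _ _⟩

theorem exists_hilbertBasis_nat_extension [CompleteSpace E] [TopologicalSpace.SeparableSpace E]
    {ι : Type*} [Infinite ι] {v : ι → E} (hv : Orthonormal 𝕜 v) :
    ∃ (b : HilbertBasis ℕ 𝕜 E) (k : ι → ℕ), Injective k ∧ ∀ i, b (k i) = v i := by
  have hinj : Injective v := hv.linearIndependent.injective
  obtain ⟨w, b₀, hvw, hb₀⟩ := hv.toSubtypeRange.exists_hilbertBasis_extension
  have : Countable w := countable_of_orthonormal b₀.orthonormal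
  have : Infinite w := ((infinite_range_of_injective hinj).mono hvw).to_subtype
  obtain ⟨σ⟩ := nonempty_equiv_of_countable (α := ℕ) (β := w)
  obtain ⟨b, hb⟩ := exists_hilbertBasis_coe_eq_comp b₀ σ
  refine ⟨b, fun i => σ.symm ⟨v i, hvw (mem_range_self i)⟩, fun i j hij => ?_, fun i => ?_⟩
  · exact hinj (congrArg Subtype.val (σ.symm.injective hij))
  · simp [hb, hb₀]

theorem map_le_of_forall_hilbertBasis_mem {F : Type*} [NormedAddCommGroup F] [NormedSpace 𝕜 F]
    {M : Submodule 𝕜 E} {ι : Type*} (b : HilbertBasis ι 𝕜 M) (T : E →L[𝕜] F) {L : Submodule 𝕜 F}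
    (hL : IsClosed (L : Set F)) (hT : ∀ i, T (b i) ∈ L) : M.map (T : E →ₗ[𝕜] F) ≤ L := by
  let N : Submodule 𝕜 M := L.comap ((T : E →ₗ[𝕜] F).comp M.subtype)
  have hN : IsClosed (N : Set M) := hL.preimage (T.continuous.comp continuous_subtype_val)
  have hspan : Submodule.span 𝕜 (range b) ≤ N := Submodule.span_le.2 (range_subset_iff.2 hT)
  have htop : (⊤ : Submodule 𝕜 M) ≤ N :=
    b.dense_span ▸ Submodule.topologicalClosure_minimal _ hspan hN
  rintro _ ⟨x, hx, rfl⟩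
  exact htop (Submodule.mem_top (x := ⟨x, hx⟩))

end HilbertBasis

section Unitary

variable {𝕜 H : Type*} [RCLike 𝕜] [NormedAddCommGroup H] [InnerProductSpace 𝕜 H]

theorem pointwiseStabilizer_anti {K K' : Submodule 𝕜 H} (h : K ≤ K') :
    pointwiseStabilizer K' ⊆ pointwiseStabilizer K :=
  fun _ hu x hx => hu x (h hx)

theorem exists_mem_pointwiseStabilizer_orthogonal_extending (M : Submodule 𝕜 H)
    [M.HasOrthogonalProjection] (U : M ≃ₗᵢ[𝕜] M) :
    ∃ u ∈ pointwiseStabilizer Mᗮ, ∀ x : M, u x = U x := by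
  refine ⟨M.orthogonalDecomposition.trans ((LinearIsometryEquiv.withLpProdCongr 2 U
    (LinearIsometryEquiv.refl 𝕜 Mᗮ)).trans M.orthogonalDecomposition.symm), fun x hx => ?_,
    fun x => ?_⟩
  · simp only [LinearIsometryEquiv.trans_apply]
    rw [LinearIsometryEquiv.symm_apply_eq]
    simp [Submodule.orthogonalDecomposition_apply,
      Submodule.orthogonalProjectionOnto_apply_of_mem_orthogonal hx]
  · simp only [LinearIsometryEquiv.trans_apply]
    rw [LinearIsometryEquiv.symm_apply_eq]
    simp [Submodule.orthogonalDecomposition_apply,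
      Submodule.orthogonalProjectionOnto_apply_of_mem_orthogonal (M.le_orthogonal_orthogonal x.2),
      Submodule.orthogonalProjectionOnto_apply_of_mem_orthogonal
        (M.le_orthogonal_orthogonal (U x).2)]

theorem exists_mem_pointwiseStabilizer_orthogonal_permuting {M : Submodule 𝕜 H} [CompleteSpace M]
    {ι : Type*} (b : HilbertBasis ι 𝕜 M) (π : Equiv.Perm ι) :
    ∃ u ∈ pointwiseStabilizer Mᗮ, ∀ i, u (b i) = b (π i) := by
  classical
  obtain ⟨c, hc⟩ := exists_hilbertBasis_coe_eq_comp b π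
  obtain ⟨u, huM, hu⟩ :=
    exists_mem_pointwiseStabilizer_orthogonal_extending M (b.repr.trans c.repr.symm)
  refine ⟨u, huM, fun i => ?_⟩
  rw [hu, LinearIsometryEquiv.trans_apply, b.repr_self, c.repr_symm_single, hc, comp_apply]

theorem exists_mem_pointwiseStabilizer_orthogonal_of_isMoiety {M : Submodule 𝕜 H} [CompleteSpace M]
    {ι : Type*} [Countable ι] (b : HilbertBasis ι 𝕜 M) {X Y : Set ι} (hX : IsMoiety X)
    (hY : IsMoiety Y) : ∃ u ∈ pointwiseStabilizer Mᗮ, ∀ i ∈ X, ∃ j ∈ Y, u (b i) = b j := by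
  obtain ⟨π, hπ⟩ := hX.exists_perm_mapsTo hY
  obtain ⟨u, huM, hu⟩ := exists_mem_pointwiseStabilizer_orthogonal_permuting b π
  exact ⟨u, huM, fun i hi => ⟨π i, hπ hi, hu i⟩⟩

end Unitary

section SwapReflection

variable {𝕜 H : Type*} [RCLike 𝕜] [NormedAddCommGroup H] [InnerProductSpace 𝕜 H] [CompleteSpace H]
  {ι : Type*} {e f : ι → H} {A : Set ι} {i : ι}

variable (𝕜) in
/-- The unitary operator exchanging `e i` and `f i` for all `i ∈ A` and fixing the vectors
orthogonal to them, where `e` and `f` are mutually orthogonal orthonormal families. It is encoded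
as the reflection that negates the differences `e i - f i`. -/
noncomputable def swapReflection (e f : ι → H) (A : Set ι) : H ≃ₗᵢ[𝕜] H :=
  (Submodule.span 𝕜 ((fun i => e i - f i) '' A))ᗮ.reflection

theorem swapReflection_swapReflection (x : H) :
    swapReflection 𝕜 e f A (swapReflection 𝕜 e f A x) = x :=
  Submodule.reflection_reflection _ x

theorem swapReflection_eq_self {x : H} (hx : ∀ i ∈ A, ⟪e i - f i, x⟫_𝕜 = 0) :
    swapReflection 𝕜 e f A x = x := by
  have hspan : Submodule.span 𝕜 ((fun i => e i - f i) '' A) ≤ (𝕜 ∙ x)ᗮ :=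
    Submodule.span_le.2 <| forall_mem_image.2 fun i hi =>
      Submodule.mem_orthogonal_singleton_iff_inner_left.2 (hx i hi)
  exact Submodule.reflection_mem_subspace_eq_self fun y hy =>
    Submodule.mem_orthogonal_singleton_iff_inner_left.1 (hspan hy)

theorem swapReflection_left_of_mem (he : Orthonormal 𝕜 e) (hf : Orthonormal 𝕜 f)
    (hef : ∀ i j, ⟪e i, f j⟫_𝕜 = 0) (hi : i ∈ A) : swapReflection 𝕜 e f A (e i) = f i := by
  classical
  have hfe (i j : ι) : ⟪f i, e j⟫_𝕜 = 0 := inner_eq_zero_symm.1 (hef j i)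
  have hsub : swapReflection 𝕜 e f A (e i - f i) = -(e i - f i) :=
    Submodule.reflection_mem_subspace_orthogonalComplement_eq_neg <|
      Submodule.le_orthogonal_orthogonal _ (Submodule.subset_span ⟨i, hi, rfl⟩)
  have hadd : swapReflection 𝕜 e f A (e i + f i) = e i + f i :=
    swapReflection_eq_self fun j _ => by
      simp [inner_sub_left, inner_add_right, orthonormal_iff_ite.1 he, orthonormal_iff_ite.1 hf,
        hef, hfe]
  refine smul_right_injective H (two_ne_zero (α := 𝕜)) ?_
  calc (2 : 𝕜) • swapReflection 𝕜 e f A (e i)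
      = swapReflection 𝕜 e f A (e i + f i) + swapReflection 𝕜 e f A (e i - f i) := by
        rw [map_add, map_sub, two_smul]
        abel
    _ = (2 : 𝕜) • f i := by
        rw [hadd, hsub, two_smul]
        abel

theorem swapReflection_right_of_mem (he : Orthonormal 𝕜 e) (hf : Orthonormal 𝕜 f)
    (hef : ∀ i j, ⟪e i, f j⟫_𝕜 = 0) (hi : i ∈ A) : swapReflection 𝕜 e f A (f i) = e i := by
  rw [← swapReflection_left_of_mem he hf hef hi, swapReflection_swapReflection]

theorem swapReflection_left_of_notMem (he : Orthonormal 𝕜 e) (hef : ∀ i j, ⟪e i, f j⟫_𝕜 = 0)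
    (hi : i ∉ A) : swapReflection 𝕜 e f A (e i) = e i :=
  swapReflection_eq_self fun j hj => by
    rw [inner_sub_left, he.2 (ne_of_mem_of_not_mem hj hi), inner_eq_zero_symm.1 (hef i j), sub_zero]

theorem swapReflection_right_of_notMem (hf : Orthonormal 𝕜 f) (hef : ∀ i j, ⟪e i, f j⟫_𝕜 = 0)
    (hi : i ∉ A) : swapReflection 𝕜 e f A (f i) = f i :=
  swapReflection_eq_self fun j hj => by
    rw [inner_sub_left, hf.2 (ne_of_mem_of_not_mem hj hi), hef, sub_zero]

theorem swapReflection_inv_mul_left_of_mem_symmDiff (he : Orthonormal 𝕜 e)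
    (hf : Orthonormal 𝕜 f) (hef : ∀ i j, ⟪e i, f j⟫_𝕜 = 0) {B : Set ι} (hi : i ∈ A ∆ B) :
    ((swapReflection 𝕜 e f A)⁻¹ * swapReflection 𝕜 e f B) (e i) = f i := by
  rw [LinearIsometryEquiv.coe_mul, comp_apply, LinearIsometryEquiv.coe_inv,
    LinearIsometryEquiv.symm_apply_eq]
  rcases hi with ⟨hA, hB⟩ | ⟨hB, hA⟩
  · rw [swapReflection_left_of_notMem he hef hB, swapReflection_right_of_mem he hf hef hA]
  · rw [swapReflection_left_of_mem he hf hef hB, swapReflection_right_of_notMem hf hef hA]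

theorem swapReflection_inv_mul_left_of_notMem_symmDiff (he : Orthonormal 𝕜 e)
    (hf : Orthonormal 𝕜 f) (hef : ∀ i j, ⟪e i, f j⟫_𝕜 = 0) {B : Set ι} (hi : i ∉ A ∆ B) :
    ((swapReflection 𝕜 e f A)⁻¹ * swapReflection 𝕜 e f B) (e i) = e i := by
  rw [LinearIsometryEquiv.coe_mul, comp_apply, LinearIsometryEquiv.coe_inv,
    LinearIsometryEquiv.symm_apply_eq]
  have hAB : i ∈ A ↔ i ∈ B := by
    simpa only [mem_symmDiff, not_or, not_and_not_right, ← iff_def] using hi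
  by_cases hB : i ∈ B
  · rw [swapReflection_left_of_mem he hf hef hB,
      swapReflection_left_of_mem he hf hef (hAB.2 hB)]
  · rw [swapReflection_left_of_notMem he hef hB,
      swapReflection_left_of_notMem he hef (hAB.not.2 hB)]

end SwapReflection

section Transport

variable {𝕜 H : Type*} [RCLike 𝕜] [NormedAddCommGroup H] [InnerProductSpace 𝕜 H] [CompleteSpace H]
  {W : Set (H ≃ₗᵢ[𝕜] H)}

theorem exists_swap_mem_sq (hW : IsCountablySyndetic W) (hsym : W⁻¹ = W) {e f : ℕ → H}
    (he : Orthonormal 𝕜 e) (hf : Orthonormal 𝕜 f) (hef : ∀ i j, ⟪e i, f j⟫_𝕜 = 0) :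
    ∃ D, IsMoiety D ∧ ∃ g ∈ W ^ 2, (∀ i ∈ D, g (e i) = f i) ∧ ∀ i ∉ D, g (e i) = e i := by
  have : Uncountable (Set ℕ) := ⟨fun _ =>
    have ⟨c, hc⟩ := Countable.exists_injective_nat (Set ℕ)
    cantor_injective c hc⟩
  obtain ⟨A, hA⟩ := exists_pairwise_isMoiety_symmDiff
  obtain ⟨S, T, hST, hmem⟩ := hW.exists_ne_inv_mul_mem fun S => swapReflection 𝕜 e f (A S)
  rw [hsym, ← pow_two] at hmem
  exact ⟨A S ∆ A T, hA hST, _, hmem,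
    fun i hi => swapReflection_inv_mul_left_of_mem_symmDiff he hf hef hi,
    fun i hi => swapReflection_inv_mul_left_of_notMem_symmDiff he hf hef hi⟩

variable {M : Submodule 𝕜 H} [CompleteSpace M] {n : ℕ}

theorem exists_mem_pow_map_into_isMoiety (hW : IsCountablySyndetic W) (hsym : W⁻¹ = W)
    (hM : pointwiseStabilizer Mᗮ ⊆ W ^ n) (hMpinf : ¬ FiniteDimensional 𝕜 Mᗮ)
    (b : HilbertBasis ℕ 𝕜 M) :
    ∃ E, IsMoiety E ∧ ∃ g ∈ W ^ (n + 4), ∀ i, ∃ j ∈ E, g (b i) = b j := by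
  obtain ⟨f, hf, hfM⟩ := exists_orthonormal_forall_mem fun _ : ℕ => hMpinf
  have hb : Orthonormal 𝕜 fun i => (b i : H) := b.orthonormal.comp_linearIsometry M.subtypeₗᵢ
  obtain ⟨D, hD, g, hgW, hgD, hgDc⟩ := exists_swap_mem_sq hW hsym hb hf fun i j =>
    Submodule.inner_right_of_mem_orthogonal (b i).2 (hfM j)
  obtain ⟨E, hED, hE, hDE⟩ := exists_subset_infinite_infinite_diff hD.2
  obtain ⟨u, huM, hu⟩ := exists_mem_pointwiseStabilizer_orthogonal_of_isMoiety b hD.compl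
    ⟨hE, hD.compl.2.mono (compl_subset_compl.2 hED)⟩
  refine ⟨D ∪ E, ⟨hD.1.mono subset_union_left, by rwa [compl_union]⟩, g⁻¹ * u * g, ?_,
    fun i => ?_⟩
  · have h := mul_mem_mul (mul_mem_mul (inv_mem_pow_of_inv_eq hsym hgW) (hM huM)) hgW
    rwa [← pow_add, ← pow_add, show 2 + n + 2 = n + 4 by ring] at h
  · change ∃ j ∈ D ∪ E, g⁻¹ (u (g (b i))) = b j
    have hinv {x y : H} (hxy : g x = y) : g⁻¹ y = x := g.symm_apply_eq.2 hxy.symm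
    by_cases hi : i ∈ D
    · exact ⟨i, .inl hi, by rw [hgD i hi, huM _ (hfM i), hinv (hgD i hi)]⟩
    · obtain ⟨j, hj, huj⟩ := hu i hi
      exact ⟨j, .inr hj, by rw [hgDc i hi, huj, hinv (hgDc j (hED hj))]⟩

theorem exists_mem_pow_map_isMoiety_into (hW : IsCountablySyndetic W) (hsym : W⁻¹ = W)
    (hM : pointwiseStabilizer Mᗮ ⊆ W ^ n) (b : HilbertBasis ℕ 𝕜 M) {k : ℕ → ℕ}
    (hk : Injective k) {f : ℕ → H} (hf : Orthonormal 𝕜 f)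
    (hbf : ∀ i j, ⟪(b (k i) : H), f j⟫_𝕜 = 0) {E : Set ℕ} (hE : IsMoiety E) :
    ∃ g ∈ W ^ (n + 2), ∀ i ∈ E, ∃ j, g (b i) = f j := by
  have hbk : Orthonormal 𝕜 fun i => (b (k i) : H) :=
    (b.orthonormal.comp k hk).comp_linearIsometry M.subtypeₗᵢ
  obtain ⟨D, hD, g, hgW, hgD, -⟩ := exists_swap_mem_sq hW hsym hbk hf hbf
  obtain ⟨u, huM, hu⟩ :=
    exists_mem_pointwiseStabilizer_orthogonal_of_isMoiety b hE (hD.image hk)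
  refine ⟨g * u, ?_, fun i hi => ?_⟩
  · have h := mul_mem_mul hgW (hM huM)
    rwa [← pow_add, add_comm] at h
  · obtain ⟨_, ⟨j, hj, rfl⟩, huj⟩ := hu i hi
    exact ⟨j, by rw [LinearIsometryEquiv.coe_mul, comp_apply, huj, hgD j hj]⟩

theorem exists_mem_pow_map_le [TopologicalSpace.SeparableSpace M] (hW : IsCountablySyndetic W)
    (hsym : W⁻¹ = W) (hM : pointwiseStabilizer Mᗮ ⊆ W ^ n) (hMinf : ¬ FiniteDimensional 𝕜 M)
    (hMpinf : ¬ FiniteDimensional 𝕜 Mᗮ) {L : Submodule 𝕜 H} (hLc : IsClosed (L : Set H))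
    (hLinf : ¬ FiniteDimensional 𝕜 L) :
    ∃ g ∈ W ^ (2 * (n + 3)), M.map (g.toLinearEquiv : H →ₗ[𝕜] H) ≤ L := by
  obtain ⟨e, f, he, hf, hef, heM, hfL⟩ := exists_orthonormal_pair hMinf hLinf
  have heM' : Orthonormal 𝕜 fun i => (⟨e i, heM i⟩ : M) := M.subtypeₗᵢ.orthonormal_comp_iff.1 he
  obtain ⟨b, k, hk, hbk⟩ := exists_hilbertBasis_nat_extension heM'
  obtain ⟨E, hE, g, hgW, hg⟩ := exists_mem_pow_map_into_isMoiety hW hsym hM hMpinf b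
  obtain ⟨h, hhW, hh⟩ := exists_mem_pow_map_isMoiety_into hW hsym hM b hk hf
    (fun i j => by rw [hbk, hef]) hE
  refine ⟨h * g, ?_, map_le_of_forall_hilbertBasis_mem b (h * g : H ≃ₗᵢ[𝕜] H) hLc fun i => ?_⟩
  · have h := mul_mem_mul hhW hgW
    rwa [← pow_add, show n + 2 + (n + 4) = 2 * (n + 3) by ring] at h
  · obtain ⟨j, hj, hgj⟩ := hg i
    obtain ⟨l, hl⟩ := hh j hj
    have hhgi : (h * g) (b i) = f l := by rw [LinearIsometryEquiv.coe_mul, comp_apply, hgj, hl]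
    exact hhgi ▸ hfL l

end Transport

theorem exists_transporter_to_orthogonal_complement_general {𝕜 H : Type*} [RCLike 𝕜]
    [NormedAddCommGroup H] [InnerProductSpace 𝕜 H] [CompleteSpace H] {W : Set (H ≃ₗᵢ[𝕜] H)}
    (hsym : W⁻¹ = W) (hW : IsCountablySyndetic W) {K : Submodule 𝕜 H}
    [TopologicalSpace.SeparableSpace Kᗮ] (hKinf : ¬ FiniteDimensional 𝕜 K)
    (hKpinf : ¬ FiniteDimensional 𝕜 Kᗮ) {n : ℕ} (hGK : pointwiseStabilizer K ⊆ W ^ n)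
    {L : Submodule 𝕜 H} (hLc : IsClosed (L : Set H)) (hLinf : ¬ FiniteDimensional 𝕜 L) :
    ∃ v ∈ W ^ (2 * (n + 3)), ∃ L' : Submodule 𝕜 H, L' ≤ L ∧ IsClosed (L' : Set H) ∧
      L'.map (v.toLinearEquiv : H →ₗ[𝕜] H) = Kᗮ := by
  have hKK : K ≤ Kᗮᗮ := K.le_orthogonal_orthogonal
  have hKppinf : ¬ FiniteDimensional 𝕜 Kᗮᗮ := fun _ =>
    hKinf (Submodule.finiteDimensional_of_le hKK)
  obtain ⟨g, hgW, hgL⟩ := exists_mem_pow_map_le hW hsym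
    ((pointwiseStabilizer_anti hKK).trans hGK) hKpinf hKppinf hLc hLinf
  refine ⟨g⁻¹, inv_mem_pow_of_inv_eq hsym hgW, Kᗮ.map (g.toLinearEquiv : H →ₗ[𝕜] H), hgL, ?_, ?_⟩
  · exact g.toHomeomorph.isClosedMap _ K.isClosed_orthogonal
  · exact (Submodule.map_symm_eq_iff g.toLinearEquiv).2 rfl

/-- Let `H` be an infinite-dimensional separable complex Hilbert space, `W` a symmetric
countably syndetic subset of `U(H)`, and `K` a balanced closed subspace of `H` such that
`G_K ⊆ W ^ 24` and `W ^ 120` contains a relatively open neighborhood of the identity in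
the setwise stabilizer `I_K`. Then for every infinite-dimensional closed subspace `L ⊆ H`
there exist `v ∈ W ^ 64` and a closed subspace `L' ⊆ L` with `v(L') = Kᗮ`. -/
theorem exists_transporter_to_orthogonal_complement
    {H : Type*} [NormedAddCommGroup H] [InnerProductSpace ℂ H] [CompleteSpace H]
    [TopologicalSpace.SeparableSpace H] (hinf : ¬ FiniteDimensional ℂ H)
    (W : Set (H ≃ₗᵢ[ℂ] H)) (hsym : W⁻¹ = W)
    (hsynd : ∃ s : ℕ → (H ≃ₗᵢ[ℂ] H), ∀ g : (H ≃ₗᵢ[ℂ] H), ∃ n : ℕ, g ∈ s n • W)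
    (K : Submodule ℂ H) (hKc : IsClosed (K : Set H))
    (hKinf : ¬ FiniteDimensional ℂ K) (hKpinf : ¬ FiniteDimensional ℂ Kᗮ)
    (hGK : pointwiseStabilizer K ⊆ W ^ 24)
    (hIK : ∃ O : Set (H ≃ₗᵢ[ℂ] H), O ⊆ setwiseStabilizer K ∧ O ⊆ W ^ 120 ∧ 1 ∈ O ∧
      ∃ Ω : Set (H ≃ₗᵢ[ℂ] H), IsOpen[strongOperatorTopology ℂ H] Ω ∧
        O = Ω ∩ setwiseStabilizer K)
    (L : Submodule ℂ H) (hLc : IsClosed (L : Set H)) (hLinf : ¬ FiniteDimensional ℂ L) :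
    ∃ v ∈ W ^ 64, ∃ L' : Submodule ℂ H, L' ≤ L ∧ IsClosed (L' : Set H) ∧
      L'.map (v.toLinearEquiv : H →ₗ[ℂ] H) = Kᗮ := by
  have : SecondCountableTopology H := UniformSpace.secondCountable_of_separable H
  obtain ⟨v, hv, hL'⟩ :=
    exists_transporter_to_orthogonal_complement_general hsym hsynd hKinf hKpinf hGK hLc hLinf
  exact ⟨v, pow_two_mul_subset_pow_two_mul hsym (IsCountablySyndetic.nonempty hsynd)
    (by norm_num : 24 + 3 ≤ 32) hv, hL'⟩
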